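/- Let β ∈ (0,n), p ∈ (1,∞), and f ∈ L^p(H^β_∞). Then there exists a constant C = C(β,n,p) > 0 such that ∫ (M_{H^β_∞} f)^p dH^β_∞ ≤ C ∫ |f|^p dH^β_∞. -/

import Mathlib

open scoped ENNReal
open Metric Set MeasureTheory

noncomputable section

/-- `ℝⁿ` as Euclidean space. -/
abbrev Rn (n : ℕ) := EuclideanSpace ℝ (Fin n)

/-- The Choquet integral of a nonnegative function `g` with respect to a
(monotone) set function `C`: `∫ g dC := ∫_0^∞ C({g > t}) dt`. -/
noncomputable def choquet {X : Type*} (C : Set X → ℝ≥0∞) (g : X → ℝ≥0∞) : ℝ≥0∞ :=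
  ∫⁻ t in Ioi (0 : ℝ), C {x | ENNReal.ofReal t < g x}

/-- The Choquet integral of `g` restricted to a set `A`. -/
noncomputable def choquetOn {X : Type*} (C : Set X → ℝ≥0∞) (A : Set X) (g : X → ℝ≥0∞) : ℝ≥0∞ :=
  ∫⁻ t in Ioi (0 : ℝ), C {x | x ∈ A ∧ ENNReal.ofReal t < g x}

/-- The `L^∞(C)` norm: `inf {λ > 0 : C({|f| > λ}) = 0}` (formulated in `ℝ≥0∞`). -/
noncomputable def choquetEssSup {X : Type*} (C : Set X → ℝ≥0∞) (f : X → ℝ) : ℝ≥0∞ :=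
  sInf {l : ℝ≥0∞ | C {x | l < ENNReal.ofReal |f x|} = 0}

/-- `C`-quasicontinuity of a function `f`. -/
def QuasiCont {X : Type*} [TopologicalSpace X] (C : Set X → ℝ≥0∞) (f : X → ℝ) : Prop :=
  ∀ ε : ℝ≥0∞, 0 < ε → ∃ U : Set X, IsOpen U ∧ C U < ε ∧ ContinuousOn f Uᶜ

/-- Membership in the capacitary space `L^p(C)`: `C`-quasicontinuous with
finite `p`-th power Choquet integral. -/
def MemChoquetLp {X : Type*} [TopologicalSpace X] (C : Set X → ℝ≥0∞) (p : ℝ) (f : X → ℝ) : Prop :=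
  QuasiCont C f ∧ choquet C (fun x => ENNReal.ofReal |f x| ^ p) < ∞

/-- The normalization constant `ω_β = π^{β/2}/Γ(β/2+1)`. -/
noncomputable def omegaC (β : ℝ) : ℝ≥0∞ :=
  ENNReal.ofReal (Real.pi ^ (β / 2) / Real.Gamma (β / 2 + 1))

/-- The `β`-dimensional Hausdorff content `H^β_∞`, defined via countable
coverings by balls: `inf {∑ ω_β r_i^β : E ⊆ ⋃ B(x_i, r_i)}`. -/
noncomputable def hContent (n : ℕ) (β : ℝ) (E : Set (Rn n)) : ℝ≥0∞ :=
  ⨅ (c : ℕ → Rn n × ℝ) (_ : E ⊆ ⋃ i, ball (c i).1 (c i).2),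
    ∑' i, omegaC β * ENNReal.ofReal ((c i).2 ^ β)

/-- The centered Hausdorff content maximal function
`M_{H^β_∞} g(x) := sup_{r>0} (1/(ω_β r^β)) ∫_{B(x,r)} g dH^β_∞`. -/
noncomputable def maximalH (n : ℕ) (β : ℝ) (g : Rn n → ℝ≥0∞) (x : Rn n) : ℝ≥0∞ :=
  ⨆ (r : ℝ) (_ : 0 < r),
    (omegaC β * ENNReal.ofReal (r ^ β))⁻¹ * choquetOn (hContent n β) (ball x r) g
/-- The weight `ω_β r^β` of a ball of radius `r` in the definition of `H^β_∞`. -/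
def ballWeight (β r : ℝ) : ℝ≥0∞ := omegaC β * ENNReal.ofReal (r ^ β)

lemma omegaC_pos {β : ℝ} (hβ : 0 < β) : 0 < omegaC β :=
  ENNReal.ofReal_pos.2 <|
    div_pos (Real.rpow_pos_of_pos Real.pi_pos _) (Real.Gamma_pos_of_pos (by positivity))

lemma ballWeight_zero {β : ℝ} (hβ : 0 < β) : ballWeight β 0 = 0 := by
  simp [ballWeight, Real.zero_rpow hβ.ne']

lemma ballWeight_ne_top (β r : ℝ) : ballWeight β r ≠ ∞ :=
  ENNReal.mul_ne_top ENNReal.ofReal_ne_top ENNReal.ofReal_ne_top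

lemma ballWeight_pos {β r : ℝ} (hβ : 0 < β) (hr : 0 < r) : 0 < ballWeight β r :=
  ENNReal.mul_pos (omegaC_pos hβ).ne' (ENNReal.ofReal_pos.2 (Real.rpow_pos_of_pos hr _)).ne'

lemma ballWeight_mono {β r s : ℝ} (hβ : 0 < β) (hr : 0 ≤ r) (hrs : r ≤ s) :
    ballWeight β r ≤ ballWeight β s := by
  unfold ballWeight
  gcongr

lemma ballWeight_mul {β a r : ℝ} (ha : 0 ≤ a) (hr : 0 ≤ r) :
    ballWeight β (a * r) = ENNReal.ofReal (a ^ β) * ballWeight β r := by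
  rw [ballWeight, ballWeight, Real.mul_rpow ha hr, ENNReal.ofReal_mul (Real.rpow_nonneg ha _)]
  ring

lemma exists_radius_bound {β : ℝ} (hβ : 0 < β) {K : ℝ≥0∞} (hK : K ≠ ∞) :
    ∃ R : ℝ, ∀ r : ℝ, 0 < r → ballWeight β r ≤ K → r ≤ R := by
  have ho : omegaC β ≠ ∞ := ENNReal.ofReal_ne_top
  have hquot : K / omegaC β ≠ ∞ := ENNReal.div_ne_top hK (omegaC_pos hβ).ne'
  refine ⟨(K / omegaC β).toReal ^ β⁻¹, fun r hr h => ?_⟩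
  have h1 : ENNReal.ofReal (r ^ β) ≤ K / omegaC β := by
    rw [ENNReal.le_div_iff_mul_le (.inl (omegaC_pos hβ).ne') (.inl ho), mul_comm]
    exact h
  rw [Real.le_rpow_inv_iff_of_pos hr.le ENNReal.toReal_nonneg hβ]
  exact (ENNReal.ofReal_le_iff_le_toReal hquot).1 h1

lemma hContent_mono {n : ℕ} {β : ℝ} {E F : Set (Rn n)} (h : E ⊆ F) :
    hContent n β E ≤ hContent n β F :=
  le_iInf₂ fun c hc => iInf₂_le c (h.trans hc)

lemma hContent_ball_le {n : ℕ} {β : ℝ} (hβ : 0 < β) (x : Rn n) (r : ℝ) :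
    hContent n β (ball x r) ≤ ballWeight β r := by
  refine (iInf₂_le (fun i : ℕ => if i = 0 then (x, r) else (x, 0)) ?_).trans ?_
  · exact subset_iUnion_of_subset 0 (by simp)
  · rw [tsum_eq_single 0]
    · simp [ballWeight]
    · intro i hi
      simp [hi, Real.zero_rpow hβ.ne']

lemma hContent_empty {n : ℕ} {β : ℝ} (hβ : 0 < β) : hContent n β ∅ = 0 := by
  simpa [ballWeight_zero hβ] using hContent_ball_le hβ (0 : Rn n) 0

lemma hContent_iUnion_le {n : ℕ} {β : ℝ} (s : ℕ → Set (Rn n)) :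
    hContent n β (⋃ i, s i) ≤ ∑' i, hContent n β (s i) := by
  refine ENNReal.le_of_forall_pos_le_add fun ε hε hb => ?_
  rcases ENNReal.exists_pos_sum_of_countable (ENNReal.coe_pos.2 hε).ne' ℕ with ⟨ε', hε', hl⟩
  grw [← hl]
  rw [← ENNReal.tsum_add]
  have hex : ∀ i, ∃ c : ℕ → Rn n × ℝ, (s i ⊆ ⋃ j, ball (c j).1 (c j).2) ∧
      ∑' j, omegaC β * ENNReal.ofReal ((c j).2 ^ β) < hContent n β (s i) + ε' i := by
    intro i
    have : hContent n β (s i) < hContent n β (s i) + ε' i :=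
      ENNReal.lt_add_right (ne_top_of_le_ne_top hb.ne <| ENNReal.le_tsum _)
        (by simpa using (hε' i).ne')
    obtain ⟨c, hc⟩ := iInf_lt_iff.mp this
    obtain ⟨h1, h2⟩ := iInf_lt_iff.mp hc
    exact ⟨c, h1, h2⟩
  choose f hf using hex
  refine le_trans ?_ (ENNReal.tsum_le_tsum fun i => (hf i).2.le)
  rw [← ENNReal.tsum_prod (f := fun i j => omegaC β * ENNReal.ofReal ((f i j).2 ^ β)),
    ← Nat.pairEquiv.symm.tsum_eq]
  refine iInf₂_le (fun k : ℕ => f k.unpair.1 k.unpair.2) ?_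
  refine iUnion_subset fun i => (hf i).1.trans <| iUnion_subset fun j => ?_
  exact subset_iUnion_of_subset (Nat.pair i j) (by simp)

/-- The Hausdorff content as an outer measure. -/
def hContentOuter (n : ℕ) (β : ℝ) (hβ : 0 < β) : OuterMeasure (Rn n) where
  measureOf := hContent n β
  empty := hContent_empty hβ
  mono := hContent_mono
  iUnion_nat := fun s _ => hContent_iUnion_le s

lemma hContent_biUnion_le {n : ℕ} {β : ℝ} (hβ : 0 < β) {ι : Type*} {I : Set ι}
    (hI : I.Countable) (s : ι → Set (Rn n)) :
    hContent n β (⋃ i ∈ I, s i) ≤ ∑' i : I, hContent n β (s i) :=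
  measure_biUnion_le (hContentOuter n β hβ) hI s

/-- A family of balls `B(x, r x)`, `x ∈ A`, is packed when the total weight of its members inside
any ball `B` is at most twice the weight of `B`. -/
def Packed {n : ℕ} (w : ℝ → ℝ≥0∞) (r : Rn n → ℝ) (A : Set (Rn n)) : Prop :=
  ∀ (F : Finset (Rn n)) (c : Rn n) (R : ℝ), 0 < R → ↑F ⊆ A →
    (∀ x ∈ F, ball x (r x) ⊆ ball c R ∧ r x ≤ R) → ∑ x ∈ F, w (r x) ≤ 2 * w R

lemma tsum_subtype_le_of_finset {α : Type*} {s : Set α} {f : α → ℝ≥0∞} {b : ℝ≥0∞}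
    (h : ∀ F : Finset α, ↑F ⊆ s → ∑ x ∈ F, f x ≤ b) : ∑' x : s, f x ≤ b := by
  rw [ENNReal.tsum_eq_iSup_sum]
  refine iSup_le fun F => ?_
  have := h (F.map (Function.Embedding.subtype _)) (by simp)
  simpa using this

lemma sum_le_tsum_subtype {α : Type*} {s : Set α} {f : α → ℝ≥0∞} {F : Finset α}
    (h : ↑F ⊆ s) : ∑ x ∈ F, f x ≤ ∑' x : s, f x := by
  rw [tsum_subtype]
  refine le_trans (Finset.sum_le_sum fun x hx => ?_) (ENNReal.sum_le_tsum F)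
  rw [indicator_of_mem (h hx)]

/-- Every family of balls has a packed subfamily such that each ball of the family lies in a ball
whose weight is controlled by the weights of the members of the subfamily inside it. -/
lemma exists_packed_subset {n : ℕ} {w : ℝ → ℝ≥0∞} (hw : ∀ a b : ℝ, 0 < a → a ≤ b → w a ≤ w b)
    {r : Rn n → ℝ} {u : Set (Rn n)} (hr : ∀ x ∈ u, 0 < r x) :
    ∃ A ⊆ u, Packed w r A ∧ ∀ x ∈ u, ∃ (c : Rn n) (R : ℝ), 0 < R ∧ ball x (r x) ⊆ ball c R ∧
      r x ≤ R ∧ w R ≤ ∑' y : {y | y ∈ A ∧ ball y (r y) ⊆ ball c R ∧ r y ≤ R}, w (r y) := by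
  classical
  obtain ⟨A, hA⟩ := zorn_subset {A | A ⊆ u ∧ Packed w r A} (by
    intro C hC hchain
    rcases C.eq_empty_or_nonempty with rfl | hne
    · refine ⟨∅, ⟨empty_subset _, fun F c R _ hF _ => ?_⟩, by simp⟩
      obtain rfl : F = ∅ := by simpa using hF
      simp
    · refine ⟨⋃₀ C, ⟨sUnion_subset fun s hs => (hC hs).1, fun F c R hR hF h => ?_⟩,
        fun s hs => subset_sUnion_of_mem hs⟩
      obtain ⟨t, ht, hFt⟩ := hchain.directedOn.exists_mem_subset_of_finite_of_subset_sUnion hne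
        F.finite_toSet hF
      exact (hC ht).2 F c R hR hFt h)
  refine ⟨A, hA.prop.1, hA.prop.2, fun x hx => ?_⟩
  by_cases hxA : x ∈ A
  · refine ⟨x, r x, hr x hx, subset_rfl, le_rfl, ?_⟩
    exact ENNReal.le_tsum
      (⟨x, hxA, subset_rfl, le_rfl⟩ : {y | y ∈ A ∧ ball y (r y) ⊆ ball x (r x) ∧ r y ≤ r x})
  · have hnot : ¬ Packed w r (insert x A) := fun h =>
      hxA (hA.le_of_ge ⟨insert_subset hx hA.prop.1, h⟩ (subset_insert x A) (mem_insert x A))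
    unfold Packed at hnot
    push Not at hnot
    obtain ⟨F, c, R, hR, hF, hball, hlt⟩ := hnot
    have hxF : x ∈ F := by
      by_contra hxF
      refine hlt.not_ge (hA.prop.2 F c R hR (fun y hy => ?_) hball)
      exact (hF hy).resolve_left fun h => hxF (h ▸ hy)
    refine ⟨c, R, hR, (hball x hxF).1, (hball x hxF).2, ?_⟩
    have hsum : w R ≤ ∑ y ∈ F.erase x, w (r y) := by
      by_contra! h
      refine hlt.not_ge ?_
      rw [← Finset.add_sum_erase F _ hxF, two_mul]
      exact add_le_add (hw _ _ (hr x hx) (hball x hxF).2) h.le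
    refine hsum.trans (sum_le_tsum_subtype fun y hy => ?_)
    have hy' := Finset.mem_erase.1 hy
    exact ⟨(hF hy'.2).resolve_left hy'.1, hball y hy'.2⟩

lemma Packed.tsum_ball_inter_le {n : ℕ} {β : ℝ} (hβ : 0 < β) {r : Rn n → ℝ} {A : Set (Rn n)}
    (hA : Packed (ballWeight β) r A)
    (hd : A.PairwiseDisjoint fun x => closedBall x (2 * r x)) (c : Rn n) (R : ℝ) :
    ∑' x : A, hContent n β (ball c R ∩ ball x (r x)) ≤
      ENNReal.ofReal (2 * 3 ^ β + 1) * ballWeight β R := by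
  classical
  rcases le_or_gt R 0 with hR | hR
  · simp [ball_eq_empty.2 hR, hContent_empty hβ]
  refine tsum_subtype_le_of_finset (f := fun x => hContent n β (ball c R ∩ ball x (r x)))
    fun F hF => ?_
  have key : ∀ x ∈ F, hContent n β (ball c R ∩ ball x (r x)) ≤
      (if r x ≤ R ∧ (ball c R ∩ ball x (r x)).Nonempty then ballWeight β (r x) else 0) +
      (if R < r x ∧ (ball c R ∩ ball x (r x)).Nonempty then ballWeight β R else 0) := by
    intro x _
    rcases (ball c R ∩ ball x (r x)).eq_empty_or_nonempty with h | h
    · simp [h, hContent_empty hβ]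
    · rcases le_or_gt (r x) R with hx | hx
      · simpa [h, hx, hx.not_gt] using
          (hContent_mono inter_subset_right).trans (hContent_ball_le hβ x (r x))
      · simpa [h, hx, hx.not_ge] using
          (hContent_mono inter_subset_left).trans (hContent_ball_le hβ c R)
  refine (Finset.sum_le_sum key).trans ?_
  rw [Finset.sum_add_distrib, ← Finset.sum_filter, ← Finset.sum_filter,
    ENNReal.ofReal_add (by positivity) zero_le_one, add_mul, ENNReal.ofReal_one, one_mul]
  refine add_le_add ?_ ?_
  · have h3 : ballWeight β (3 * R) = ENNReal.ofReal (3 ^ β) * ballWeight β R :=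
      ballWeight_mul (by norm_num) hR.le
    rw [ENNReal.ofReal_mul (by norm_num), mul_assoc, ← h3, ENNReal.ofReal_ofNat]
    refine hA _ c (3 * R) (by positivity) (fun x hx => hF (Finset.mem_filter.1 hx).1) ?_
    intro x hx
    obtain ⟨-, hxR, y, hyc, hyx⟩ := Finset.mem_filter.1 hx
    refine ⟨ball_subset_ball' ?_, by linarith⟩
    have := dist_triangle_left x c y
    rw [mem_ball] at hyc hyx
    linarith
  · rw [Finset.sum_const, nsmul_eq_mul]
    refine mul_le_of_le_one_left zero_le ?_
    have hcard : (F.filter fun x => R < r x ∧ (ball c R ∩ ball x (r x)).Nonempty).card ≤ 1 := by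
      refine Finset.card_le_one.2 fun x hx y hy => ?_
      obtain ⟨hxF, hxR, z, hzc, hzx⟩ := Finset.mem_filter.1 hx
      obtain ⟨hyF, hyR, z', hzc', hzy⟩ := Finset.mem_filter.1 hy
      rw [mem_ball] at hzc hzx hzc' hzy
      refine hd.elim_set (hF hxF) (hF hyF) c ?_ ?_
      · rw [mem_closedBall]
        have := dist_triangle_left c x z
        linarith
      · rw [mem_closedBall]
        have := dist_triangle_left c y z'
        linarith
    exact_mod_cast hcard

lemma Packed.tsum_hContent_inter_le {n : ℕ} {β : ℝ} (hβ : 0 < β) {r : Rn n → ℝ} {A : Set (Rn n)}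
    (hA : Packed (ballWeight β) r A)
    (hd : A.PairwiseDisjoint fun x => closedBall x (2 * r x)) (E : Set (Rn n)) :
    ∑' x : A, hContent n β (ball x (r x) ∩ E) ≤
      ENNReal.ofReal (2 * 3 ^ β + 1) * hContent n β E := by
  conv_rhs => rw [hContent]
  rw [ENNReal.mul_iInf_of_ne (ENNReal.ofReal_pos.2 (by positivity)).ne' ENNReal.ofReal_ne_top]
  refine le_iInf fun c => ?_
  rw [ENNReal.mul_iInf_of_ne (ENNReal.ofReal_pos.2 (by positivity)).ne' ENNReal.ofReal_ne_top]
  refine le_iInf fun hc => ?_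
  calc ∑' x : A, hContent n β (ball x (r x) ∩ E)
      ≤ ∑' x : A, ∑' i, hContent n β (ball (c i).1 (c i).2 ∩ ball x (r x)) := by
        refine ENNReal.tsum_le_tsum fun x => (hContent_mono ?_).trans (hContent_iUnion_le _)
        rw [← iUnion_inter, inter_comm]
        exact inter_subset_inter_left _ hc
    _ = ∑' i, ∑' x : A, hContent n β (ball (c i).1 (c i).2 ∩ ball x (r x)) := ENNReal.tsum_comm
    _ ≤ ∑' i, ENNReal.ofReal (2 * 3 ^ β + 1) * ballWeight β (c i).2 :=
        ENNReal.tsum_le_tsum fun i => hA.tsum_ball_inter_le hβ hd _ _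
    _ = _ := ENNReal.tsum_mul_left

lemma antitone_hContent_inter {n : ℕ} {β : ℝ} (B : Set (Rn n)) (g : Rn n → ℝ≥0∞) :
    Antitone fun t : ℝ => hContent n β (B ∩ {x | ENNReal.ofReal t < g x}) :=
  fun _ _ hst => hContent_mono <| inter_subset_inter_right _ fun _ hx =>
    (ENNReal.ofReal_le_ofReal hst).trans_lt hx

lemma Packed.tsum_choquetOn_le {n : ℕ} {β : ℝ} (hβ : 0 < β) {r : Rn n → ℝ} {A : Set (Rn n)}
    (hA : Packed (ballWeight β) r A)
    (hd : A.PairwiseDisjoint fun x => closedBall x (2 * r x)) (hc : A.Countable)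
    (g : Rn n → ℝ≥0∞) :
    ∑' x : A, choquetOn (hContent n β) (ball x (r x)) g ≤
      ENNReal.ofReal (2 * 3 ^ β + 1) * choquet (hContent n β) g := by
  have := hc.to_subtype
  calc ∑' x : A, choquetOn (hContent n β) (ball x (r x)) g
      = ∫⁻ t in Ioi (0 : ℝ), ∑' x : A,
          hContent n β (ball x (r x) ∩ {y | ENNReal.ofReal t < g y}) :=
        (lintegral_tsum fun x : A =>
          (antitone_hContent_inter (ball (x : Rn n) (r x)) g).measurable.aemeasurable).symm
    _ ≤ ∫⁻ t in Ioi (0 : ℝ), ENNReal.ofReal (2 * 3 ^ β + 1) *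
          hContent n β {y | ENNReal.ofReal t < g y} :=
        lintegral_mono fun t => hA.tsum_hContent_inter_le hβ hd _
    _ = _ := lintegral_const_mul' _ _ ENNReal.ofReal_ne_top

/-- A packed family with finite total weight controls the content of any set covered by balls
that are enlargements of members of a family subordinate to it. -/
lemma hContent_le_tsum_of_saturated {n : ℕ} {β : ℝ} (hβ : 0 < β) {r : Rn n → ℝ}
    {u A S : Set (Rn n)} (hr : ∀ x ∈ A, 0 < r x)
    (hT : ∑' x : A, ballWeight β (r x) ≠ ∞)
    (hsat : ∀ x ∈ u, ∃ (c : Rn n) (R : ℝ), 0 < R ∧ ball x (r x) ⊆ ball c R ∧ r x ≤ R ∧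
      ballWeight β R ≤
        ∑' y : {y | y ∈ A ∧ ball y (r y) ⊆ ball c R ∧ r y ≤ R}, ballWeight β (r y))
    (hu : ∀ x ∈ u, 0 < r x) (hS : S ⊆ ⋃ x ∈ u, closedBall x (8 * r x)) :
    hContent n β S ≤ ENNReal.ofReal (41 ^ β) * ∑' x : A, ballWeight β (r x) := by
  let inner : Rn n × ℝ → Set (Rn n) := fun q =>
    {y | y ∈ A ∧ ball y (r y) ⊆ ball q.1 q.2 ∧ r y ≤ q.2}
  let Q : Set (Rn n × ℝ) :=
    {q | 0 < q.2 ∧ ballWeight β q.2 ≤ ∑' y : inner q, ballWeight β (r y)}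
  obtain ⟨R₀, hR₀⟩ := exists_radius_bound hβ hT
  obtain ⟨V, hVQ, hVd, hVcov⟩ := Vitali.exists_disjoint_subfamily_covering_enlargement_closedBall
    Q (fun q => q.1) (fun q => 10 * q.2) (10 * R₀) (by
      rintro q ⟨hq, hqw⟩
      have : q.2 ≤ R₀ := hR₀ _ hq <| hqw.trans <|
        ENNReal.tsum_mono_subtype (fun y => ballWeight β (r y)) fun y hy => hy.1
      linarith) 4 (by norm_num)
  have hVdb : V.PairwiseDisjoint fun q => ball q.1 q.2 := hVd.mono_on fun q hq =>
    (ball_subset_closedBall.trans (closedBall_subset_closedBall (by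
      linarith [(hVQ hq).1])) : ball q.1 q.2 ⊆ closedBall q.1 (10 * q.2))
  have hVc : V.Countable := hVdb.countable_of_isOpen (fun _ _ => isOpen_ball)
    fun q hq => nonempty_ball.2 (hVQ hq).1
  have hinner : V.PairwiseDisjoint inner := by
    refine fun q hq q' hq' hne => disjoint_left.2 fun y hy hy' => ?_
    have hyy := mem_ball_self (x := y) (hr y hy.1)
    exact disjoint_left.1 (hVdb hq hq' hne) (hy.2.1 hyy) (hy'.2.1 hyy)
  have hcover : S ⊆ ⋃ q ∈ V, ball q.1 (41 * q.2) := by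
    intro z hz
    obtain ⟨x, hx, hzx⟩ := mem_iUnion₂.1 (hS hz)
    obtain ⟨c, R, hR, hsub, hxR, hw⟩ := hsat x hx
    obtain ⟨q, hq, hqsub⟩ := hVcov (c, R) ⟨hR, hw⟩
    refine mem_iUnion₂.2 ⟨q, hq, closedBall_subset_ball ?_ (hqsub ?_)⟩
    · linarith [(hVQ hq).1]
    · have h1 := mem_ball.1 (hsub (mem_ball_self (hu x hx)))
      have h2 := dist_triangle z x c
      rw [mem_closedBall] at hzx ⊢
      dsimp only
      linarith
  calc hContent n β S ≤ ∑' q : V, hContent n β (ball q.1.1 (41 * q.1.2)) :=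
        (hContent_mono hcover).trans (hContent_biUnion_le hβ hVc _)
    _ ≤ ∑' q : V, ENNReal.ofReal (41 ^ β) * ∑' y : inner q, ballWeight β (r y) := by
        refine ENNReal.tsum_le_tsum fun q => (hContent_ball_le hβ _ _).trans ?_
        rw [ballWeight_mul (by norm_num) (hVQ q.2).1.le]
        gcongr
        exact (hVQ q.2).2
    _ = ENNReal.ofReal (41 ^ β) * ∑' y : ⋃ q ∈ V, inner q, ballWeight β (r y) := by
        rw [ENNReal.tsum_mul_left, ENNReal.tsum_biUnion' (f := fun y => ballWeight β (r y)) hinner]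
    _ ≤ _ := by
        gcongr
        exact ENNReal.tsum_mono_subtype (fun y => ballWeight β (r y))
          (iUnion₂_subset fun q _ y hy => hy.1)

/-- The constant in the weak-type estimate for the Hausdorff content maximal function. -/
def weakConst (β : ℝ) : ℝ := 41 ^ β * (2 * 3 ^ β + 1)

lemma weakConst_pos (β : ℝ) : 0 < weakConst β := by
  unfold weakConst
  positivity

lemma choquetOn_le_choquet {n : ℕ} {β : ℝ} (B : Set (Rn n)) (g : Rn n → ℝ≥0∞) :
    choquetOn (hContent n β) B g ≤ choquet (hContent n β) g :=
  lintegral_mono fun _ => hContent_mono fun _ hx => hx.2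

/-- Weak-type `(1,1)` estimate for the Hausdorff content maximal function. -/
lemma mul_hContent_maximalH_gt_le {n : ℕ} {β : ℝ} (hβ : 0 < β) (g : Rn n → ℝ≥0∞) {t : ℝ≥0∞}
    (ht : 0 < t) (ht' : t ≠ ∞) :
    t * hContent n β {x | t < maximalH n β g x} ≤
      ENNReal.ofReal (weakConst β) * choquet (hContent n β) g := by
  set S := {x | t < maximalH n β g x} with hS
  by_cases hI : choquet (hContent n β) g = ∞
  · rw [hI, ENNReal.mul_top (ENNReal.ofReal_pos.2 (weakConst_pos β)).ne']
    exact le_top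
  have hex : ∀ x, ∃ r : ℝ, x ∈ S → 0 < r ∧
      t * ballWeight β r ≤ choquetOn (hContent n β) (ball x r) g := by
    intro x
    by_cases hx : x ∈ S
    · obtain ⟨r, hr⟩ := lt_iSup_iff.1 (show t < maximalH n β g x from hx)
      obtain ⟨hr0, hr⟩ := lt_iSup_iff.1 hr
      refine ⟨r, fun _ => ⟨hr0, ?_⟩⟩
      rw [← ENNReal.div_eq_inv_mul] at hr
      exact ENNReal.mul_le_of_le_div hr.le
    · exact ⟨0, fun h => absurd h hx⟩
  choose r hr using hex
  obtain ⟨R₀, hR₀⟩ := exists_radius_bound (β := β) hβ (ENNReal.div_ne_top hI ht.ne')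
  obtain ⟨u, huS, hud, hucov⟩ := Vitali.exists_disjoint_subfamily_covering_enlargement_closedBall
    S (fun x => x) (fun x => 2 * r x) (2 * R₀) (by
      intro x hx
      have : r x ≤ R₀ := hR₀ _ (hr x hx).1 <| by
        rw [ENNReal.le_div_iff_mul_le (.inl ht.ne') (.inl ht'), mul_comm]
        exact (hr x hx).2.trans (choquetOn_le_choquet _ _)
      linarith) 4 (by norm_num)
  have hupos : ∀ x ∈ u, 0 < r x := fun x hx => (hr x (huS hx)).1
  have huc : u.Countable := by
    refine Set.PairwiseDisjoint.countable_of_isOpen (s := fun x => ball x (2 * r x))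
      (hud.mono fun x => ball_subset_closedBall) (fun _ _ => isOpen_ball) fun x hx =>
      nonempty_ball.2 (by linarith [hupos x hx])
  obtain ⟨A, hAu, hA, hsat⟩ := exists_packed_subset
    (fun a b ha hab => ballWeight_mono hβ ha.le hab) hupos
  have hApos : ∀ x ∈ A, 0 < r x := fun x hx => hupos x (hAu hx)
  have hsum : t * ∑' x : A, ballWeight β (r x) ≤
      ENNReal.ofReal (2 * 3 ^ β + 1) * choquet (hContent n β) g := by
    rw [← ENNReal.tsum_mul_left]
    exact (ENNReal.tsum_le_tsum fun x : A => (hr x (huS (hAu x.2))).2).trans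
      (hA.tsum_choquetOn_le hβ (hud.subset hAu) (huc.mono hAu) g)
  have hT : ∑' x : A, ballWeight β (r x) ≠ ∞ := by
    intro h
    rw [h, ENNReal.mul_top ht.ne', top_le_iff] at hsum
    exact ENNReal.mul_ne_top ENNReal.ofReal_ne_top hI hsum
  have hcov : S ⊆ ⋃ x ∈ u, closedBall x (8 * r x) := by
    intro x hx
    obtain ⟨y, hy, hxy⟩ := hucov x hx
    refine mem_iUnion₂.2 ⟨y, hy, ?_⟩
    have := hxy (mem_closedBall_self (by linarith [(hr x hx).1]))
    convert this using 2
    ring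
  calc t * hContent n β S
      ≤ t * (ENNReal.ofReal (41 ^ β) * ∑' x : A, ballWeight β (r x)) := by
        gcongr
        exact hContent_le_tsum_of_saturated hβ hApos hT hsat hupos hcov
    _ = ENNReal.ofReal (41 ^ β) * (t * ∑' x : A, ballWeight β (r x)) := by ring
    _ ≤ ENNReal.ofReal (41 ^ β) *
        (ENNReal.ofReal (2 * 3 ^ β + 1) * choquet (hContent n β) g) := by gcongr
    _ = _ := by rw [weakConst, ENNReal.ofReal_mul (by positivity), mul_assoc]

lemma antitone_hContent_superlevel {n : ℕ} {β : ℝ} (g : Rn n → ℝ≥0∞) :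
    Antitone fun t : ℝ => hContent n β {x | ENNReal.ofReal t < g x} :=
  fun _ _ hst => hContent_mono fun _ hx => (ENNReal.ofReal_le_ofReal hst).trans_lt hx

/-- Layer-cake formula for the Choquet integral of a power, with a dilation parameter `a`. -/
lemma choquet_rpow {X : Type*} (C : Set X → ℝ≥0∞) (h : X → ℝ≥0∞) {a p : ℝ} (ha : 0 < a)
    (hp : 0 < p) :
    choquet C (fun x => h x ^ p) = ENNReal.ofReal (a ^ p * p) *
      ∫⁻ s in Ioi (0 : ℝ), ENNReal.ofReal (s ^ (p - 1)) * C {x | ENNReal.ofReal (a * s) < h x} := by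
  have himage : (fun s : ℝ => (a * s) ^ p) '' Ioi 0 = Ioi 0 := by
    ext t
    constructor
    · rintro ⟨s, hs, rfl⟩
      exact Real.rpow_pos_of_pos (mul_pos ha hs) _
    · intro ht
      rw [mem_Ioi] at ht
      refine ⟨t ^ p⁻¹ / a, div_pos (Real.rpow_pos_of_pos ht _) ha, ?_⟩
      dsimp only
      rw [mul_div_cancel₀ _ ha.ne', Real.rpow_inv_rpow ht.le hp.ne']
  have hderiv : ∀ s ∈ Ioi (0 : ℝ), HasDerivWithinAt (fun s : ℝ => (a * s) ^ p)
      (a ^ p * p * s ^ (p - 1)) (Ioi 0) s := by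
    intro s hs
    have h1 : HasDerivAt (fun s : ℝ => a * s) a s := by
      simpa using (hasDerivAt_id s).const_mul a
    have h2 := h1.rpow_const (p := p) (.inl (mul_pos ha hs).ne')
    have h3 : a * p * (a * s) ^ (p - 1) = a ^ p * p * s ^ (p - 1) := by
      rw [Real.mul_rpow ha.le (le_of_lt hs), Real.rpow_sub_one ha.ne']
      field_simp
    exact h3 ▸ h2.hasDerivWithinAt
  have hinj : InjOn (fun s : ℝ => (a * s) ^ p) (Ioi 0) := by
    intro s hs t ht hst
    have := (Real.rpow_left_inj (mul_pos ha hs).le (mul_pos ha ht).le hp.ne').1 hst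
    exact mul_left_cancel₀ ha.ne' this
  unfold choquet
  conv_lhs => rw [← himage]
  rw [lintegral_image_eq_lintegral_abs_deriv_mul measurableSet_Ioi hderiv hinj,
    ← lintegral_const_mul' _ _ ENNReal.ofReal_ne_top]
  refine setLIntegral_congr_fun measurableSet_Ioi fun s hs => ?_
  have hs' : (0 : ℝ) < s := hs
  dsimp only
  rw [abs_of_pos (by positivity), ENNReal.ofReal_mul (by positivity), mul_assoc]
  congr 3
  ext x
  rw [mem_ofPred_eq, mem_ofPred_eq, ← ENNReal.ofReal_rpow_of_nonneg (by positivity) hp.le,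
    ENNReal.rpow_lt_rpow_iff hp]

/-- The part of `g` above the level `s`. -/
def upperPart {X : Type*} (s : ℝ) (g : X → ℝ≥0∞) : X → ℝ≥0∞ :=
  indicator {x | ENNReal.ofReal s < g x} g

lemma lt_upperPart_iff {X : Type*} {s t : ℝ} {g : X → ℝ≥0∞} {x : X} :
    ENNReal.ofReal t < upperPart s g x ↔ ENNReal.ofReal s < g x ∧ ENNReal.ofReal t < g x := by
  by_cases h : ENNReal.ofReal s < g x <;> simp [upperPart, indicator, h]

lemma setLIntegral_Ioi_zero {s : ℝ} (hs : 0 < s) (F : ℝ → ℝ≥0∞) :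
    ∫⁻ t in Ioi (0 : ℝ), F t = (∫⁻ t in Ioc 0 s, F t) + ∫⁻ t in Ioi s, F t := by
  rw [← Ioc_union_Ioi_eq_Ioi hs.le, lintegral_union measurableSet_Ioi]
  exact disjoint_left.2 fun t ht ht' => (mem_Ioi.1 ht').not_ge ht.2

lemma setLIntegral_Ioc_le {s : ℝ} {F : ℝ → ℝ≥0∞} {b : ℝ≥0∞} (h : ∀ t ∈ Ioc 0 s, F t ≤ b) :
    ∫⁻ t in Ioc 0 s, F t ≤ ENNReal.ofReal s * b := by
  calc ∫⁻ t in Ioc 0 s, F t ≤ ∫⁻ _ in Ioc 0 s, b := setLIntegral_mono' measurableSet_Ioc h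
    _ = _ := by rw [setLIntegral_const, Real.volume_Ioc, sub_zero, mul_comm]

lemma choquet_upperPart_le {n : ℕ} {β : ℝ} {s : ℝ} (hs : 0 < s) (g : Rn n → ℝ≥0∞) :
    choquet (hContent n β) (upperPart s g) ≤
      ENNReal.ofReal s * hContent n β {x | ENNReal.ofReal s < g x} +
        ∫⁻ t in Ioi s, hContent n β {x | ENNReal.ofReal t < g x} := by
  unfold choquet
  rw [setLIntegral_Ioi_zero hs]
  refine add_le_add (setLIntegral_Ioc_le fun t _ => hContent_mono fun x hx => ?_)
    (lintegral_mono fun t => hContent_mono fun x hx => ?_)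
  · exact (lt_upperPart_iff.1 hx).1
  · exact (lt_upperPart_iff.1 hx).2

lemma maximalH_le_add_upperPart {n : ℕ} {β : ℝ} (hβ : 0 < β) {s : ℝ} (hs : 0 < s)
    (g : Rn n → ℝ≥0∞) (x : Rn n) :
    maximalH n β g x ≤ ENNReal.ofReal s + maximalH n β (upperPart s g) x := by
  refine iSup₂_le fun r hr => ?_
  have hint : choquetOn (hContent n β) (ball x r) g ≤
      ENNReal.ofReal s * ballWeight β r +
        choquetOn (hContent n β) (ball x r) (upperPart s g) := by
    unfold choquetOn
    rw [setLIntegral_Ioi_zero hs]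
    refine add_le_add (setLIntegral_Ioc_le fun t _ => ?_) ?_
    · exact (hContent_mono fun y hy => hy.1).trans (hContent_ball_le hβ x r)
    · refine (setLIntegral_mono' measurableSet_Ioi fun t ht => hContent_mono fun y hy => ?_).trans
        (lintegral_mono_set (Ioi_subset_Ioi hs.le))
      refine ⟨hy.1, lt_upperPart_iff.2 ⟨?_, hy.2⟩⟩
      exact (ENNReal.ofReal_le_ofReal (le_of_lt ht)).trans_lt hy.2
  calc (ballWeight β r)⁻¹ * choquetOn (hContent n β) (ball x r) g
      ≤ (ballWeight β r)⁻¹ * (ENNReal.ofReal s * ballWeight β r +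
          choquetOn (hContent n β) (ball x r) (upperPart s g)) := by gcongr
    _ = ENNReal.ofReal s +
        (ballWeight β r)⁻¹ * choquetOn (hContent n β) (ball x r) (upperPart s g) := by
        rw [mul_add, mul_left_comm, ENNReal.inv_mul_cancel (ballWeight_pos hβ hr).ne'
          (ballWeight_ne_top β r), mul_one]
    _ ≤ _ := by
        gcongr
        exact le_iSup₂ (f := fun (r : ℝ) (_ : 0 < r) => (omegaC β * ENNReal.ofReal (r ^ β))⁻¹ *
          choquetOn (hContent n β) (ball x r) (upperPart s g)) r hr

lemma mul_hContent_maximalH_gt_two_mul_le {n : ℕ} {β : ℝ} (hβ : 0 < β) {s : ℝ} (hs : 0 < s)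
    (g : Rn n → ℝ≥0∞) :
    ENNReal.ofReal s * hContent n β {x | ENNReal.ofReal (2 * s) < maximalH n β g x} ≤
      ENNReal.ofReal (weakConst β) *
        (ENNReal.ofReal s * hContent n β {x | ENNReal.ofReal s < g x} +
          ∫⁻ t in Ioi s, hContent n β {x | ENNReal.ofReal t < g x}) := by
  calc ENNReal.ofReal s * hContent n β {x | ENNReal.ofReal (2 * s) < maximalH n β g x}
      ≤ ENNReal.ofReal s *
          hContent n β {x | ENNReal.ofReal s < maximalH n β (upperPart s g) x} := by
        refine mul_le_mul_right (hContent_mono fun x hx => ?_) _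
        have h := (show ENNReal.ofReal (2 * s) < maximalH n β g x from hx).trans_le
          (maximalH_le_add_upperPart hβ hs g x)
        rw [two_mul, ENNReal.ofReal_add hs.le hs.le] at h
        exact (ENNReal.add_lt_add_iff_left ENNReal.ofReal_ne_top).1 h
    _ ≤ ENNReal.ofReal (weakConst β) * choquet (hContent n β) (upperPart s g) :=
        mul_hContent_maximalH_gt_le hβ _ (ENNReal.ofReal_pos.2 hs) ENNReal.ofReal_ne_top
    _ ≤ _ := by
        gcongr
        exact choquet_upperPart_le hs g

lemma setLIntegral_Ioo_rpow {p t : ℝ} (hp : 1 < p) (ht : 0 < t) :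
    ∫⁻ s in Ioo 0 t, ENNReal.ofReal (s ^ (p - 2)) = ENNReal.ofReal (t ^ (p - 1) / (p - 1)) := by
  have hint : IntervalIntegrable (fun s : ℝ => s ^ (p - 2)) volume 0 t :=
    intervalIntegral.intervalIntegrable_rpow' (by linarith)
  rw [setLIntegral_congr Ioo_ae_eq_Ioc, ← ofReal_integral_eq_lintegral_ofReal
    ((intervalIntegrable_iff_integrableOn_Ioc_of_le ht.le).1 hint)
    ((ae_restrict_mem measurableSet_Ioc).mono fun s hs => Real.rpow_nonneg hs.1.le _),
    ← intervalIntegral.integral_of_le ht.le, integral_rpow (.inl (by linarith))]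
  have h1 : p - 2 + 1 = p - 1 := by ring
  rw [h1, Real.zero_rpow (by linarith), sub_zero]

/-- Hardy's identity for the tail integral of a measurable function. -/
lemma setLIntegral_rpow_mul_tail {p : ℝ} (hp : 1 < p) {F : ℝ → ℝ≥0∞} (hF : Measurable F) :
    ∫⁻ s in Ioi (0 : ℝ), ENNReal.ofReal (s ^ (p - 2)) * ∫⁻ t in Ioi s, F t =
      ENNReal.ofReal (p - 1)⁻¹ * ∫⁻ t in Ioi (0 : ℝ), ENNReal.ofReal (t ^ (p - 1)) * F t := by
  let G : ℝ → ℝ → ℝ≥0∞ := fun s t =>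
    indicator {q : ℝ × ℝ | q.1 < q.2} (fun q => ENNReal.ofReal (q.1 ^ (p - 2)) * F q.2) (s, t)
  have hG : Measurable (Function.uncurry G) := by
    refine Measurable.indicator ?_ (measurableSet_lt measurable_fst measurable_snd)
    exact (measurable_fst.pow_const _).ennreal_ofReal.mul (hF.comp measurable_snd)
  calc ∫⁻ s in Ioi (0 : ℝ), ENNReal.ofReal (s ^ (p - 2)) * ∫⁻ t in Ioi s, F t
      = ∫⁻ s in Ioi (0 : ℝ), ∫⁻ t in Ioi (0 : ℝ), G s t := by
        refine setLIntegral_congr_fun measurableSet_Ioi fun s hs => ?_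
        have h1 : (fun t => G s t) =
            indicator (Ioi s) fun t => ENNReal.ofReal (s ^ (p - 2)) * F t := by
          ext t
          simp [G, indicator]
        rw [h1, lintegral_indicator measurableSet_Ioi, Measure.restrict_restrict measurableSet_Ioi,
          inter_eq_left.2 (Ioi_subset_Ioi (le_of_lt hs)),
          lintegral_const_mul' _ _ ENNReal.ofReal_ne_top]
    _ = ∫⁻ t in Ioi (0 : ℝ), ∫⁻ s in Ioi (0 : ℝ), G s t :=
        lintegral_lintegral_swap hG.aemeasurable
    _ = ∫⁻ t in Ioi (0 : ℝ),
          ENNReal.ofReal (p - 1)⁻¹ * (ENNReal.ofReal (t ^ (p - 1)) * F t) := by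
        refine setLIntegral_congr_fun measurableSet_Ioi fun t ht => ?_
        have h1 : (fun s => G s t) =
            indicator (Iio t) fun s => ENNReal.ofReal (s ^ (p - 2)) * F t := by
          ext s
          simp [G, indicator]
        have h2 : Measurable fun s : ℝ => ENNReal.ofReal (s ^ (p - 2)) :=
          (measurable_id.pow_const _).ennreal_ofReal
        rw [h1, lintegral_indicator measurableSet_Iio, Measure.restrict_restrict measurableSet_Iio,
          Iio_inter_Ioi, lintegral_mul_const _ h2, setLIntegral_Ioo_rpow hp ht, div_eq_inv_mul,
          ENNReal.ofReal_mul (inv_nonneg.2 (by linarith)), mul_assoc]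
    _ = _ := lintegral_const_mul' _ _ ENNReal.ofReal_ne_top

/-- Strong-type `(p,p)` estimate for the Hausdorff content maximal function of an arbitrary
nonnegative function. -/
lemma choquet_maximalH_rpow_le {n : ℕ} {β p : ℝ} (hβ : 0 < β) (hp : 1 < p) (g : Rn n → ℝ≥0∞) :
    choquet (hContent n β) (fun x => maximalH n β g x ^ p) ≤
      ENNReal.ofReal (2 ^ p * weakConst β * (1 + (p - 1)⁻¹)) *
        choquet (hContent n β) (fun x => g x ^ p) := by
  have hp0 : 0 < p := by linarith
  have hp1 : 0 < (p - 1)⁻¹ := inv_pos.2 (by linarith)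
  have hK := weakConst_pos β
  set F : ℝ → ℝ≥0∞ := fun t => hContent n β {x | ENNReal.ofReal t < g x} with hFdef
  have hF : Measurable F := (antitone_hContent_superlevel g).measurable
  have hpow : ∀ s : ℝ, 0 < s → ENNReal.ofReal (s ^ (p - 1)) =
      ENNReal.ofReal (s ^ (p - 2)) * ENNReal.ofReal s := by
    intro s hs
    rw [← ENNReal.ofReal_mul (by positivity), ← Real.rpow_add_one hs.ne']
    ring_nf
  have hg : choquet (hContent n β) (fun x => g x ^ p) =
      ENNReal.ofReal p * ∫⁻ s in Ioi (0 : ℝ), ENNReal.ofReal (s ^ (p - 1)) * F s := by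
    simpa [hFdef] using choquet_rpow (hContent n β) g one_pos hp0
  have hmeas : Measurable fun s : ℝ => ENNReal.ofReal (s ^ (p - 1)) * F s :=
    (measurable_id.pow_const _).ennreal_ofReal.mul hF
  have hmain : ∫⁻ s in Ioi (0 : ℝ), ENNReal.ofReal (s ^ (p - 1)) *
        hContent n β {x | ENNReal.ofReal (2 * s) < maximalH n β g x} ≤
      ENNReal.ofReal (weakConst β * (1 + (p - 1)⁻¹)) *
        ∫⁻ s in Ioi (0 : ℝ), ENNReal.ofReal (s ^ (p - 1)) * F s := by
    calc _ ≤ ∫⁻ s in Ioi (0 : ℝ), ENNReal.ofReal (weakConst β) *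
          (ENNReal.ofReal (s ^ (p - 1)) * F s +
            ENNReal.ofReal (s ^ (p - 2)) * ∫⁻ t in Ioi s, F t) := by
          refine setLIntegral_mono' measurableSet_Ioi fun s hs => ?_
          rw [hpow s hs, mul_assoc, mul_assoc, ← mul_add]
          exact (mul_le_mul_right (mul_hContent_maximalH_gt_two_mul_le hβ hs g) _).trans_eq
            (mul_left_comm _ _ _)
      _ = _ := by
          rw [lintegral_const_mul' _ _ ENNReal.ofReal_ne_top, lintegral_add_left hmeas,
            setLIntegral_rpow_mul_tail hp hF, ENNReal.ofReal_mul hK.le,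
            ENNReal.ofReal_add zero_le_one hp1.le, ENNReal.ofReal_one]
          ring
  rw [choquet_rpow (hContent n β) _ two_pos hp0, hg]
  calc _ ≤ ENNReal.ofReal (2 ^ p * p) * (ENNReal.ofReal (weakConst β * (1 + (p - 1)⁻¹)) *
        ∫⁻ s in Ioi (0 : ℝ), ENNReal.ofReal (s ^ (p - 1)) * F s) := by gcongr
    _ = _ := by
        rw [← mul_assoc, ← mul_assoc, ← ENNReal.ofReal_mul (by positivity),
          ← ENNReal.ofReal_mul (by positivity)]
        congr 2
        ring

/-- Strong-type `(p,p)` bound for the centered Hausdorff content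
maximal function on `L^p(H^β_∞)`, `β ∈ (0,n)`, `1 < p < ∞`. -/
theorem statement7 (n : ℕ) (β p : ℝ) (hβ0 : 0 < β) (hβn : β < n) (hp : 1 < p) :
    ∃ C : ℝ, 0 < C ∧ ∀ f : Rn n → ℝ, MemChoquetLp (hContent n β) p f →
      choquet (hContent n β)
          (fun x => (maximalH n β (fun y => ENNReal.ofReal |f y|) x) ^ p) ≤
        ENNReal.ofReal C * choquet (hContent n β) (fun x => ENNReal.ofReal |f x| ^ p) := by
  have hp1 : 0 < (p - 1)⁻¹ := inv_pos.2 (by linarith)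
  have hK := weakConst_pos β
  exact ⟨2 ^ p * weakConst β * (1 + (p - 1)⁻¹), by positivity, fun f _ =>
    choquet_maximalH_rpow_le hβ0 hp _⟩

end
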